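/- The affine space 𝔸ⁿ over an algebraically closed field k of characteristic zero is simply connected: every finite étale morphism T → 𝔸ⁿ_k with T connected is an isomorphism. -/

import Mathlib

/-!
A finite étale cover of `𝔸ⁿ` is the spectrum of a finite étale algebra over a polynomial ring, so the
claim is that a connected finite étale algebra over `k[x₁, …, xₙ]` is trivial. This is proved by
induction on `n`; the case `n = 0` holds because a connected finite étale algebra over a field is a
finite field extension (`conn_field`). The inductive step (`EtaleSC.polynomial`) passes from `R` to
`R[X]`, where `R` is a factorial domain containing `ℚ`, and replaces the Riemann–Hurwitz formula by
an argument with the vector field `d/dX`.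

Let `B` be a connected finite étale `R[X]`-algebra. As `B` is étale, `d/dX` extends to a derivation
`D` of `B` (`exists_deriv_ext`). The heart of the proof is that `D` is locally nilpotent (`nilp`).
As `R[X]` is normal, `B` embeds in a field `L` finite over `K(X)`, where `K` is the fraction field of
`R` (`tensor_conn`). At a place of `L / K` where `X` has a pole, the derivation `X D` preserves the
valuation ring, since ramification is tame in characteristic zero (`val_log`); hence `D` lowers pole
orders there (`descend`). At all other places the elements of `B` have no pole, as they are integral
over `R[X]`. So for each `b` in `B` some `D^[m] b` has no poles at all, is therefore algebraic over
`K`, and is killed by `D` (`key_nilp`).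

Now `D` is locally nilpotent with `D X = 1`. Taylor expansion (`taylor`) lifts elements of `B / X B` to
the kernel of `D`, uniquely by `ker_inter`. In particular idempotents of `B / X B` lift to `B`, so
`B / X B` is a connected finite étale `R`-algebra, equal to `R` by induction. Thus the kernel of `D` is
`R`, and integrating polynomials shows `B = R[X]`.
-/

open AlgebraicGeometry CategoryTheory

/-- A scheme is simply connected if every finite étale morphism from a connected
scheme to it is an isomorphism. -/
def AlgebraicGeometry.Scheme.SimplyConnected (S : Scheme) : Prop :=
  ∀ (T : Scheme) (h : T ⟶ S), IsFinite h → IsEtale h → ConnectedSpace T → IsIso h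

namespace EtaleAffine

section

open Polynomial TensorProduct

/-! ### Logarithmic derivations and valuation rings -/

/-- A derivation `θ` of the fraction field of a discrete valuation ring `W` that multiplies an element
`t` of the maximal ideal by `-1` preserves `W`, provided that `θ` is constant over a field `K` of
characteristic zero, that the residue field is algebraic over `K`, and that the poles of `θ` on `W`
are bounded. The bound on the order of the pole is lowered one step at a time. It first drops for
a uniformizer, because of the relation with `t`, and then for every element, because its residue
is a simple root of a polynomial over `K`. -/
lemma dvr_log {K W L : Type*} [Field K] [CharZero K] [CommRing W] [IsDomain W]
    [IsDiscreteValuationRing W] [Field L] [Algebra K W] [Algebra K L] [Algebra W L]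
    [IsScalarTower K W L] [FaithfulSMul W L] (θ : Derivation K L L) (t : W) (ht0 : t ≠ 0)
    (htm : t ∈ IsLocalRing.maximalIdeal W)
    (hθt : θ (algebraMap W L t) = -algebraMap W L t)
    (hres : ∀ f : W, IsIntegral K (IsLocalRing.residue W f))
    (hbd : ∃ N : ℕ, ∀ f : W, algebraMap W L t ^ N * θ (algebraMap W L f) ∈ (algebraMap W L).range)
    (f : W) : θ (algebraMap W L f) ∈ (algebraMap W L).range := by
  obtain ⟨π, hπ⟩ := IsDiscreteValuationRing.exists_irreducible W
  obtain ⟨e, u, htu⟩ := IsDiscreteValuationRing.eq_unit_mul_pow_irreducible ht0 hπ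
  have hinj : Function.Injective (algebraMap W L) := FaithfulSMul.algebraMap_injective W L
  have hπL : algebraMap W L π ≠ 0 := fun h => hπ.ne_zero (hinj (by simpa using h))
  have he : e ≠ 0 := by
    rintro rfl
    rw [htu, pow_zero, mul_one] at htm
    exact htm u.isUnit
  have key : ∀ n : ℕ, (∀ f : W, algebraMap W L π ^ n * θ (algebraMap W L f) ∈
      (algebraMap W L).range) → ∀ f : W, θ (algebraMap W L f) ∈ (algebraMap W L).range := by
    intro n
    induction n with
    | zero => intro h f; simpa using h f
    | succ n ih =>
      intro h
      apply ih
      have hLu : algebraMap W L u ≠ 0 := by simp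
      have heK : (e : W) ∈ (algebraMap K W).range := ⟨e, by simp⟩
      have heL : (e : L) ≠ 0 := by
        have : CharZero L := charZero_of_injective_algebraMap (algebraMap K L).injective
        exact_mod_cast he
      -- differentiating `t = u π ^ e` gives `e π' = -π - u⁻¹ u' π`, and `e` is invertible
      have hπ' : algebraMap W L π ^ n * θ (algebraMap W L π) ∈ (algebraMap W L).range := by
        obtain ⟨w, hw⟩ := h u
        obtain ⟨e', rfl⟩ := Nat.exists_eq_succ_of_ne_zero he
        rw [htu, map_mul, map_pow, Derivation.leibniz, Derivation.leibniz_pow] at hθt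
        refine ⟨algebraMap K W ((e' + 1 : ℕ) : K)⁻¹ * ↑u⁻¹ * (-(u * π ^ (n+1)) - w), ?_⟩
        have hiu : algebraMap W L ↑u⁻¹ = (algebraMap W L u)⁻¹ := by
          exact eq_inv_of_mul_eq_one_left (by rw [← map_mul]; simp)
        rw [map_mul, map_mul, hiu, ← IsScalarTower.algebraMap_apply, map_sub, hw]
        simp only [map_neg, map_mul, map_pow, map_inv₀, map_natCast]
        simp only [smul_eq_mul, nsmul_eq_mul, Nat.succ_sub_one, Nat.succ_eq_add_one] at hθt heL ⊢
        field_simp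
        apply mul_left_cancel₀ (pow_ne_zero e' hπL)
        push_cast at hθt ⊢
        linear_combination (-algebraMap W L π^(n)) * hθt
      intro f
      -- a lift of the separable minimal polynomial of the residue of `f`: `p(f) = π g`, and
      -- differentiating gives `p'(f) θ f = g θ π + π θ g` with `p'(f)` a unit
      obtain ⟨p, hp1, hp2⟩ : ∃ p : K[X], aeval f p ∈ IsLocalRing.maximalIdeal W ∧
          IsUnit (aeval f (derivative p)) := by
        refine ⟨minpoly K (IsLocalRing.residue W f), ?_, ?_⟩
        · rw [← IsLocalRing.residue_eq_zero_iff]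
          have := minpoly.aeval K (IsLocalRing.residue W f)
          rwa [← IsLocalRing.ResidueField.algebraMap_eq, aeval_algebraMap_apply] at this
        · rw [← IsLocalRing.residue_ne_zero_iff_isUnit]
          have hs : (minpoly K (IsLocalRing.residue W f)).Separable :=
            (minpoly.irreducible (hres f)).separable
          have := hs.aeval_derivative_ne_zero (minpoly.aeval K (IsLocalRing.residue W f))
          rwa [← IsLocalRing.ResidueField.algebraMap_eq, aeval_algebraMap_apply] at this
      rw [hπ.maximalIdeal_eq, Ideal.mem_span_singleton] at hp1
      obtain ⟨g, hg⟩ := hp1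
      obtain ⟨a, ha⟩ := hp2
      obtain ⟨r, hr⟩ := hπ'
      obtain ⟨s, hs⟩ := h g
      have hLa : algebraMap W L a ≠ 0 := by simp
      have hia : algebraMap W L ↑a⁻¹ = (algebraMap W L a)⁻¹ := by
        exact eq_inv_of_mul_eq_one_left (by rw [← map_mul]; simp)
      have h1 : θ (aeval (algebraMap W L f) p) =
          algebraMap W L a * θ (algebraMap W L f) := by
        rw [ha, ← aeval_algebraMap_apply]
        simp
      rw [aeval_algebraMap_apply, hg, map_mul, Derivation.leibniz] at h1
      refine ⟨↑a⁻¹ * (g * r + s), ?_⟩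
      rw [map_mul, map_add, map_mul, hr, hs, hia]
      field_simp
      simp only [smul_eq_mul] at h1
      linear_combination algebraMap W L π ^ n * h1
  obtain ⟨N, hN⟩ := hbd
  refine key (e * N) (fun f => ?_) f
  obtain ⟨w, hw⟩ := hN f
  have hLu : algebraMap W L u ≠ 0 := by simp
  have hiu : algebraMap W L ↑u⁻¹ = (algebraMap W L u)⁻¹ := by
    exact eq_inv_of_mul_eq_one_left (by rw [← map_mul]; simp)
  refine ⟨(↑u⁻¹)^N * w, ?_⟩
  rw [map_mul, map_pow, hiu, hw, htu, map_mul, map_pow, mul_pow, ← pow_mul, ← mul_assoc, ← mul_assoc,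
    ← mul_pow, inv_mul_cancel₀ hLu, one_pow, one_mul]

/-- `dvr_log` for the local ring `W` of a finite `O`-algebra `S` at a prime `P` over `(t)`, where
`O / (t) = K`; it is enough that `θ` maps `O` into `W`. -/
lemma loc_log {K O S W L : Type*} [Field K] [CharZero K] [CommRing O] [CommRing S] [CommRing W]
    [IsDomain W] [IsDiscreteValuationRing W] [Field L] [Algebra K O] [Algebra K W]
    [Algebra O S] [Algebra S W] [Algebra O W] [IsScalarTower O S W] [IsScalarTower K O W]
    [Algebra K L] [Algebra W L] [Algebra S L] [IsScalarTower S W L]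
    [IsScalarTower K W L] [IsFractionRing W L] [Module.Finite O S]
    (P : Ideal S) [P.IsPrime] [IsLocalization.AtPrime W P] (θ : Derivation K L L) (t : O)
    (hO : ∀ y : O, ∃ c : K, y - algebraMap K O c ∈ Ideal.span {t})
    (htP : algebraMap O S t ∈ P) (ht0 : algebraMap O W t ≠ 0)
    (hθt : θ (algebraMap W L (algebraMap O W t)) = -algebraMap W L (algebraMap O W t))
    (hθO : ∀ y : O, θ (algebraMap W L (algebraMap O W y)) ∈ (algebraMap W L).range)
    (f : W) : θ (algebraMap W L f) ∈ (algebraMap W L).range := by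
  have htm : algebraMap O W t ∈ IsLocalRing.maximalIdeal W := by
    rw [IsScalarTower.algebraMap_apply O S W]
    exact (IsLocalization.AtPrime.to_map_mem_maximal_iff W P _).2 htP
  refine dvr_log θ (algebraMap O W t) ht0 htm hθt ?_ ?_ f
  -- the residue field of `O` at `t` is `K`, over which residues of `S` are therefore integral
  · have hS : ∀ s : S, IsIntegral K (IsLocalRing.residue W (algebraMap S W s)) := by
      intro s
      let κ := IsLocalRing.ResidueField W
      let j : O →+* integralClosure K κ :=
        ((IsLocalRing.residue W).comp (algebraMap O W)).codRestrict
          (integralClosure K κ).toSubring (by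
          intro y
          obtain ⟨c, hc⟩ := hO y
          obtain ⟨z, hz⟩ := Ideal.mem_span_singleton.1 hc
          have h1 : IsLocalRing.residue W (algebraMap O W y) = algebraMap K κ c := by
            rw [IsScalarTower.algebraMap_apply K W κ, IsScalarTower.algebraMap_apply K O W,
              IsLocalRing.ResidueField.algebraMap_eq, ← sub_eq_zero, ← map_sub, ← map_sub, hz,
              IsLocalRing.residue_eq_zero_iff, map_mul]
            exact Ideal.mul_mem_right _ _ htm
          change IsIntegral K (IsLocalRing.residue W (algebraMap O W y))
          rw [h1]
          exact isIntegral_algebraMap)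
      obtain ⟨p, hp, hp0⟩ := Algebra.IsIntegral.isIntegral (R := O) s
      have : IsIntegral (integralClosure K κ) (IsLocalRing.residue W (algebraMap S W s)) := by
        refine ⟨p.map j, hp.map j, ?_⟩
        have h2 := congrArg ((IsLocalRing.residue W).comp (algebraMap S W)) hp0
        rw [map_zero, hom_eval₂] at h2
        rw [eval₂_map, ← h2]
        change eval₂ _ _ _ = eval₂ _ _ _
        congr 1
        refine RingHom.ext fun y => ?_
        change IsLocalRing.residue W (algebraMap O W y) =
          IsLocalRing.residue W (algebraMap S W (algebraMap O S y))
        rw [IsScalarTower.algebraMap_apply O S W]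
      exact isIntegral_trans (A := integralClosure K κ) _ this
    intro w
    obtain ⟨a, s, rfl⟩ := IsLocalization.exists_mk'_eq P.primeCompl w
    have h1 : IsLocalRing.residue W (algebraMap S W s) ≠ 0 := by
      rw [IsLocalRing.residue_ne_zero_iff_isUnit]
      exact IsLocalization.map_units W s
    have h2 : IsLocalRing.residue W (IsLocalization.mk' W a s) =
        IsLocalRing.residue W (algebraMap S W a) * (IsLocalRing.residue W (algebraMap S W s))⁻¹ := by
      rw [eq_mul_inv_iff_mul_eq₀ h1, ← map_mul, IsLocalization.mk'_spec]
    rw [h2]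
    exact (hS a).mul (hS s).inv
  -- the poles of `θ` on a finite set of generators of `S` over `O` bound its poles on all of `W`
  · have hden : ∀ b : W, b ≠ 0 → ∃ k : ℕ, b ∣ algebraMap O W t ^ k := by
      intro b hb
      obtain ⟨π, hπ⟩ := IsDiscreteValuationRing.exists_irreducible W
      obtain ⟨e, u, htu⟩ := IsDiscreteValuationRing.eq_unit_mul_pow_irreducible hb hπ
      refine ⟨e, ?_⟩
      rw [hπ.maximalIdeal_eq, Ideal.mem_span_singleton] at htm
      rw [htu, mul_comm, u.isUnit.mul_right_dvd]
      exact pow_dvd_pow_of_dvd htm e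
    set τ := algebraMap W L (algebraMap O W t) with hτ
    have hone : ∀ y : L, ∃ k : ℕ, τ ^ k * y ∈ (algebraMap W L).range := by
      intro y
      obtain ⟨a, b, hb, rfl⟩ := IsFractionRing.div_surjective (A := W) y
      have hb0 := nonZeroDivisors.ne_zero hb
      have hbL : algebraMap W L b ≠ 0 := by
        simpa using hb0
      obtain ⟨k, c, hc⟩ := hden b hb0
      refine ⟨k, c * a, ?_⟩
      rw [hτ, ← map_pow, hc, map_mul, map_mul]
      field_simp
    have hmono : ∀ (y : L) (k l : ℕ), k ≤ l → τ ^ k * y ∈ (algebraMap W L).range →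
        τ ^ l * y ∈ (algebraMap W L).range := by
      intro y k l hkl h
      rw [← Nat.sub_add_cancel hkl, pow_add, mul_assoc]
      exact mul_mem (pow_mem (RingHom.mem_range_self _ _) _) h
    obtain ⟨G, hG⟩ := Module.Finite.fg_top (R := O) (M := S)
    choose n hn using fun s : S => hone (θ (algebraMap S L s))
    have hS : ∀ s : S, τ ^ (G.sup n) * θ (algebraMap S L s) ∈ (algebraMap W L).range := by
      intro s
      have hs : s ∈ Submodule.span O (G : Set S) := hG ▸ Submodule.mem_top
      induction hs using Submodule.span_induction with
      | mem s hs => exact hmono _ _ _ (Finset.le_sup hs) (hn s)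
      | zero => exact ⟨0, by simp⟩
      | add x y _ _ hx hy => rw [map_add, map_add, mul_add]; exact add_mem hx hy
      | smul c x _ hx =>
        rw [Algebra.smul_def, map_mul, Derivation.leibniz, mul_add]
        have e1 : algebraMap S L (algebraMap O S c) = algebraMap W L (algebraMap O W c) := by
          rw [IsScalarTower.algebraMap_apply S W L, ← IsScalarTower.algebraMap_apply O S W]
        refine add_mem ?_ ?_
        · rw [smul_eq_mul, mul_left_comm, e1]
          exact mul_mem (RingHom.mem_range_self _ _) hx
        · rw [smul_eq_mul, e1, IsScalarTower.algebraMap_apply S W L]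
          exact mul_mem (pow_mem (RingHom.mem_range_self _ _) _) (mul_mem (RingHom.mem_range_self _ _) (hθO c))
    refine ⟨G.sup n, fun w => ?_⟩
    obtain ⟨a, s, rfl⟩ := IsLocalization.exists_mk'_eq P.primeCompl w
    obtain ⟨u, hu⟩ := IsLocalization.map_units W s
    have huL : algebraMap W L u ≠ 0 := by simp
    have hiu : algebraMap W L ↑u⁻¹ = (algebraMap W L u)⁻¹ :=
      eq_inv_of_mul_eq_one_left (by rw [← map_mul]; simp)
    have h1 := congrArg (fun z => θ (algebraMap W L z)) (IsLocalization.mk'_spec W a s)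
    obtain ⟨x, hx⟩ := hS a
    obtain ⟨y, hy⟩ := hS s
    simp only [map_mul, Derivation.leibniz, smul_eq_mul] at h1
    rw [IsScalarTower.algebraMap_apply S W L] at hx hy
    refine ⟨↑u⁻¹ * (x - IsLocalization.mk' W a s * y), ?_⟩
    rw [map_mul, map_sub, map_mul, hx, hy, hiu]
    rw [← hu] at h1 ⊢
    field_simp
    linear_combination -τ ^ (G.sup n) * h1

/-- `loc_log` in terms of the valuation subring `V`: if `S` is a Dedekind domain contained in `V`, then
`V` is the local ring of `S` at the centre of `V`. -/
lemma dedekind_log {K O S L : Type*} [Field K] [CharZero K] [CommRing O] [CommRing S]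
    [IsDedekindDomain S] [Field L] [Algebra K O] [Algebra O S] [Algebra S L] [Algebra O L]
    [Algebra K L] [Algebra K S] [IsScalarTower K S L] [IsScalarTower O S L] [IsScalarTower K O S]
    [IsFractionRing S L] [Module.Finite O S]
    (θ : Derivation K L L) (t : O)
    (hO : ∀ y : O, ∃ c : K, y - algebraMap K O c ∈ Ideal.span {t})
    (ht0 : algebraMap O S t ≠ 0)
    (hθt : θ (algebraMap O L t) = -algebraMap O L t)
    (V : ValuationSubring L) (hSV : ∀ y : S, algebraMap S L y ∈ V)
    (hθO : ∀ y : O, θ (algebraMap O L y) ∈ V)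
    (htV : (algebraMap O L t)⁻¹ ∉ V)
    (f : L) (hf : f ∈ V) : θ f ∈ V := by
  let ι : S →+* V := (algebraMap S L).codRestrict V.toSubring hSV
  let P : Ideal S := (IsLocalRing.maximalIdeal V).comap ι
  have hPmem : ∀ s : S, s ∈ P ↔ (algebraMap S L s)⁻¹ ∉ V ∨ algebraMap S L s = 0 := by
    intro s
    rw [Ideal.mem_comap, IsLocalRing.mem_maximalIdeal, mem_nonunits_iff]
    constructor
    · intro h
      by_contra! h'
      exact h (IsUnit.of_mul_eq_one (⟨_, h'.1⟩ : V) (Subtype.ext (mul_inv_cancel₀ h'.2)))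
    · rintro (h | h) hu
      · apply h
        obtain ⟨v, hv⟩ := hu.exists_right_inv
        have h2 : algebraMap S L s * v = 1 := congrArg Subtype.val hv
        rw [← eq_inv_of_mul_eq_one_right h2]; exact v.2
      · have : ι s = 0 := Subtype.ext h
        simp [this] at hu
  have htP : algebraMap O S t ∈ P := (hPmem _).2 (Or.inl (by
    rwa [← IsScalarTower.algebraMap_apply]))
  have hP0 : P ≠ ⊥ := fun h => ht0 (by rwa [h, Ideal.mem_bot] at htP)
  have hPc : P.primeCompl ≤ nonZeroDivisors S := P.primeCompl_le_nonZeroDivisors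
  -- `V` turns out to be the localization of `S` at its centre `P`
  let W := Localization.subalgebra.ofField L P.primeCompl hPc
  have : IsLocalization.AtPrime W P := inferInstanceAs (IsLocalization P.primeCompl W)
  have : IsFractionRing W L := inferInstance
  have : IsDiscreteValuationRing W :=
    IsLocalization.AtPrime.isDiscreteValuationRing_of_dedekind_domain S hP0 W
  have hWmem : ∀ y : L, y ∈ W ↔ ∃ a s : S, s ∉ P ∧ y = algebraMap S L a * (algebraMap S L s)⁻¹ := by
    intro y
    constructor
    · rintro ⟨a, s, hs, h⟩; exact ⟨a, s, hs, h⟩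
    · rintro ⟨a, s, hs, h⟩; exact ⟨a, s, hs, h⟩
  have hWV : ∀ y ∈ W, y ∈ V := by
    intro y hy
    obtain ⟨a, s, hs, rfl⟩ := (hWmem y).1 hy
    have : (algebraMap S L s)⁻¹ ∈ V := by
      by_contra h; exact hs ((hPmem s).2 (Or.inl h))
    exact mul_mem (hSV a) this
  have hVW : ∀ y ∈ V, y ∈ W := by
    intro y hy
    rcases ValuationRing.isInteger_or_isInteger W y with ⟨w, hw⟩ | ⟨w, hw⟩
    · rw [← hw]; exact w.2
    · have hw2 := w.2
      obtain ⟨a, s, hs, h⟩ := (hWmem w).1 hw2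
      by_cases hy0 : y = 0
      · rw [hy0]; exact zero_mem W
      have h3 : y⁻¹ = algebraMap S L a * (algebraMap S L s)⁻¹ := hw.symm.trans h
      have hs0 : algebraMap S L s ≠ 0 := fun h0 => hs ((hPmem s).2 (Or.inr h0))
      refine (hWmem y).2 ⟨s, a, fun ha => hs ?_, ?_⟩
      · have : ι s = ι a * ⟨y, hy⟩ := by
          apply Subtype.ext
          change algebraMap S L s = algebraMap S L a * y
          field_simp at h3
          rw [h3, mul_comm]
        change ι s ∈ IsLocalRing.maximalIdeal V
        rw [this]
        exact Ideal.mul_mem_right _ _ ha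
      · rw [← inv_inv y, h3, mul_inv, inv_inv, mul_comm]
  have htW0 : algebraMap O W t ≠ 0 := by
    rw [IsScalarTower.algebraMap_apply O S W]
    simpa using ht0
  have e : ∀ y : O, algebraMap W L (algebraMap O W y) = algebraMap O L y := fun y =>
    (IsScalarTower.algebraMap_apply O W L y).symm
  have : IsScalarTower K O W := IsScalarTower.of_algebraMap_eq fun c => by
    rw [IsScalarTower.algebraMap_apply O S W, ← IsScalarTower.algebraMap_apply K O S,
      ← IsScalarTower.algebraMap_apply K S W]
  obtain ⟨w, hw⟩ := loc_log P θ t hO htP htW0 (by rw [e]; exact hθt)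
    (fun y => ⟨⟨_, hVW _ (hθO y)⟩, by rw [e]; rfl⟩) (⟨f, hVW f hf⟩ : W)
  have hw' : (w : L) = θ f := hw
  have hw2 := hWV _ w.2
  rwa [hw'] at hw2

open IntermediateField in
open scoped IntermediateField.algebraAdjoinAdjoin in
/-- Let `L` be finite over `K(t)`, with a `K`-derivation `θ` such that `θ t = -t`, that is, `θ` is
`x d/dx` for `x = t⁻¹`. Then `θ` preserves every valuation ring of `L / K` at which `t` vanishes. In
characteristic zero all ramification is tame, so logarithmic derivations have no poles. -/
lemma val_log {K L : Type*} [Field K] [CharZero K] [Field L] [Algebra K L] (t : L)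
    [FiniteDimensional K⟮t⟯ L] (θ : Derivation K L L) (hθt : θ t = -t)
    (V : ValuationSubring L) (hK : ∀ c : K, algebraMap K L c ∈ V) (htV : t⁻¹ ∉ V)
    (f : L) (hf : f ∈ V) : θ f ∈ V := by
  have ht0 : t ≠ 0 := by rintro rfl; exact htV (by simp)
  have htV1 : t ∈ V := (V.mem_or_inv_mem t).resolve_right htV
  let O := Algebra.adjoin K {t}
  have : IsPrincipalIdealRing O := by
    let φ : K[X] →ₐ[K] O := aeval ⟨t, Algebra.self_mem_adjoin_singleton K t⟩
    refine IsPrincipalIdealRing.of_surjective φ.toRingHom ?_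
    rintro ⟨y, hy⟩
    obtain ⟨p, rfl⟩ := Algebra.adjoin_mem_exists_aeval K t hy
    refine ⟨p, Subtype.ext ?_⟩
    simp [φ]
  have : CharZero K⟮t⟯ := charZero_of_injective_algebraMap (algebraMap K K⟮t⟯).injective
  have : CharZero O := charZero_of_injective_algebraMap (algebraMap K O).injective
  let S := integralClosure O L
  have : IsDedekindDomain S := IsIntegralClosure.isDedekindDomain O K⟮t⟯ L S
  have : Module.Finite O S := IsIntegralClosure.finite O K⟮t⟯ L S
  have : IsFractionRing S L := IsIntegralClosure.isFractionRing_of_finite_extension O K⟮t⟯ L S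
  have hOV : ∀ y : O, (y : L) ∈ V := by
    rintro ⟨y, hy⟩
    induction hy using Algebra.adjoin_induction with
    | mem x hx => obtain rfl := hx; exact htV1
    | algebraMap r => exact hK r
    | add x y _ _ hx hy => exact add_mem hx hy
    | mul x y _ _ hx hy => exact mul_mem hx hy
  have hSV : ∀ y : S, (y : L) ∈ V := by
    rintro ⟨y, hy⟩
    obtain ⟨p, hp, hp0⟩ := hy
    let j : O →+* V := (algebraMap O L).codRestrict V.toSubring hOV
    have : IsIntegral V y := ⟨p.map j, hp.map j, by rw [eval₂_map]; exact hp0⟩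
    obtain ⟨z, hz⟩ := IsIntegrallyClosed.isIntegral_iff.mp this
    have hzV := z.2
    change y ∈ V
    rw [← hz]; exact hzV
  have hθO : ∀ y : O, θ (algebraMap O L y) ∈ V := by
    rintro ⟨y, hy⟩
    change θ y ∈ V
    induction hy using Algebra.adjoin_induction with
    | mem x hx => obtain rfl := hx; rw [hθt]; exact neg_mem htV1
    | algebraMap r => simp
    | add x y _ _ hx hy => rw [map_add]; exact add_mem hx hy
    | mul x y hx' hy' hx hy =>
      rw [Derivation.leibniz]
      exact add_mem (mul_mem (hOV ⟨x, hx'⟩) hy) (mul_mem (hOV ⟨y, hy'⟩) hx)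
  have hOt : ∀ y : O, ∃ c : K, y - algebraMap K O c ∈
      Ideal.span {(⟨t, Algebra.self_mem_adjoin_singleton K t⟩ : O)} := by
    rintro ⟨y, hy⟩
    obtain ⟨p, rfl⟩ := Algebra.adjoin_mem_exists_aeval K t hy
    refine ⟨p.coeff 0, Ideal.mem_span_singleton.2
      ⟨⟨aeval t p.divX, aeval_mem_adjoin_singleton K t⟩, Subtype.ext ?_⟩⟩
    change aeval t p - algebraMap K L (p.coeff 0) = t * aeval t p.divX
    have h := congrArg (aeval t) (X_mul_divX_add p)
    rw [map_add, map_mul, aeval_X, aeval_C] at h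
    rw [← h, add_sub_cancel_right]
  exact dedekind_log (K := K) (O := O) (S := S) (L := L) θ
    ⟨t, Algebra.self_mem_adjoin_singleton K t⟩ hOt
    (fun h => ht0 (congrArg Subtype.val h)) hθt V hSV hθO htV f hf

/-! ### Poles at infinity and nilpotency -/

/-- An element integral over `K[x]` has poles of order at most `m` at the places where `x` has
a pole (measured by `x` itself), with `m` independent of the place. -/
lemma pole_bound {K L : Type*} [Field K] [Field L] [Algebra K L] (x : L) (b : L)
    (hb : IsIntegral (Algebra.adjoin K {x}) b) :
    ∃ m : ℕ, ∀ V : ValuationSubring L, (∀ c : K, algebraMap K L c ∈ V) → x ∉ V →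
      b * x⁻¹ ^ m ∈ V := by
  have hmono : ∀ (V : ValuationSubring L), x ∉ V → ∀ (y : L) (k l : ℕ), k ≤ l →
      y * x⁻¹ ^ k ∈ V → y * x⁻¹ ^ l ∈ V := by
    intro V hx y k l hkl h
    rw [← Nat.sub_add_cancel hkl, pow_add, mul_left_comm]
    exact mul_mem (pow_mem ((V.mem_or_inv_mem x).resolve_left hx) _) h
  have hc : ∀ c : Algebra.adjoin K {x}, ∃ m : ℕ, ∀ V : ValuationSubring L,
      (∀ c : K, algebraMap K L c ∈ V) → x ∉ V → (c : L) * x⁻¹ ^ m ∈ V := by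
    rintro ⟨c, hc⟩
    induction hc using Algebra.adjoin_induction with
    | mem y hy =>
      obtain rfl := hy
      refine ⟨1, fun V _ hx => ?_⟩
      have : y ≠ 0 := by rintro rfl; exact hx V.zero_mem
      simp only [pow_one]
      rw [mul_inv_cancel₀ this]; exact V.one_mem
    | algebraMap r => exact ⟨0, fun V hK _ => by simpa using hK r⟩
    | add y z _ _ hy hz =>
      obtain ⟨m, hm⟩ := hy
      obtain ⟨n, hn⟩ := hz
      refine ⟨max m n, fun V hK hx => ?_⟩
      simp only [add_mul]
      exact add_mem (hmono V hx _ _ _ (le_max_left _ _) (hm V hK hx))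
        (hmono V hx _ _ _ (le_max_right _ _) (hn V hK hx))
    | mul y z _ _ hy hz =>
      obtain ⟨m, hm⟩ := hy
      obtain ⟨n, hn⟩ := hz
      refine ⟨m + n, fun V hK hx => ?_⟩
      simp only [pow_add, mul_mul_mul_comm y z]
      exact mul_mem (hm V hK hx) (hn V hK hx)
  choose n hn using hc
  obtain ⟨p, hp, hp0⟩ := hb
  let m := p.support.sup fun i => n (p.coeff i)
  refine ⟨m, fun V hK hx => ?_⟩
  -- `q` is monic with root `x⁻¹ ^ m * b` and coefficients in `V`
  let q := (p.map (algebraMap (Algebra.adjoin K {x}) L)).scaleRoots (x⁻¹ ^ m)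
  have hq : q.Monic := (monic_scaleRoots_iff _).2 (hp.map _)
  have hqV : (q.coeffs : Set L) ⊆ V.toSubring := by
    intro z hz
    obtain ⟨i, hi, rfl⟩ := mem_coeffs_iff.1 hz
    change q.coeff i ∈ V
    rw [coeff_scaleRoots, hp.natDegree_map]
    rw [coeff_map]
    rcases lt_trichotomy i p.natDegree with h | h | h
    · rw [← pow_mul]
      by_cases hi : p.coeff i = 0
      · rw [hi, map_zero, zero_mul]; exact V.zero_mem
      refine hmono V hx _ (n (p.coeff i)) _ ?_ (hn (p.coeff i) V hK hx)
      calc n (p.coeff i) ≤ m := Finset.le_sup (f := fun i => n (p.coeff i)) (mem_support_iff.2 hi)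
        _ ≤ _ := Nat.le_mul_of_pos_right _ (by omega)
    · rw [h, hp.coeff_natDegree]; simp [V.one_mem]
    · rw [coeff_eq_zero_of_natDegree_lt h, map_zero, zero_mul]; exact V.zero_mem
  have hint : IsIntegral V (b * x⁻¹ ^ m) := by
    refine ⟨q.toSubring V.toSubring hqV, (monic_toSubring _ _ _).2 hq, ?_⟩
    have h1 : (q.toSubring V.toSubring hqV).map V.toSubring.subtype = q := map_toSubring _ _ _
    have h2 : eval₂ V.toSubring.subtype (b * x⁻¹ ^ m) (q.toSubring V.toSubring hqV) = 0 := by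
      rw [← Polynomial.eval_map, h1, mul_comm]
      have := scaleRoots_eval₂_eq_zero (p := p.map (algebraMap (Algebra.adjoin K {x}) L))
        (RingHom.id L) (r := b) (s := x⁻¹ ^ m) (by rw [eval₂_id, Polynomial.eval_map]; exact hp0)
      simpa [q] using this
    exact h2
  obtain ⟨z, hz⟩ := IsIntegrallyClosed.isIntegral_iff.mp hint
  rw [← hz]; exact z.2

/-- At a place where `x` has a pole and `x D` preserves the valuation ring, `D` lowers the order of
a pole (measured by `x`) by one. -/
lemma descend {K L : Type*} [Field K] [Field L] [Algebra K L] (x : L)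
    (hx : x ≠ 0) (D : Derivation K L L) (hD : D x = 1) (V : ValuationSubring L)
    (hθ : ∀ f ∈ V, x * D f ∈ V) (n : ℕ) : ∀ y : L, y * x⁻¹ ^ n ∈ V → D^[n] y ∈ V := by
  induction n with
  | zero => intro y hy; simpa using hy
  | succ n ih =>
    intro y hy
    rw [Function.iterate_succ_apply]
    apply ih
    have h1 := hθ _ hy
    have h2 : D y * x⁻¹ ^ n = x * D (y * x⁻¹ ^ (n+1)) + (n + 1 : ℕ) • (y * x⁻¹ ^ (n + 1)) := by
      rw [Derivation.leibniz, Derivation.leibniz_pow, Derivation.leibniz_inv, hD]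
      simp only [smul_eq_mul, nsmul_eq_mul, Nat.add_sub_cancel]
      push_cast
      linear_combination (-D y * x⁻¹ ^ n + (n + 1) * y * x⁻¹ ^ (n + 1)) * mul_inv_cancel₀ hx
    rw [h2]
    exact add_mem h1 (nsmul_mem hy _)

open IntermediateField in
/-- Let `L` be finite over `K(x)` with a `K`-derivation `D` such that `D x = 1`. If `b` and all its
iterated derivatives are integral over `K[x]`, then some iterated derivative of `b` vanishes: each
application of `D` lowers the poles over `x = ∞`, so that some `D^[m] b` has no poles at all and is
algebraic over `K`. -/
lemma key_nilp {K L : Type*} [Field K] [CharZero K] [Field L] [Algebra K L] (x : L)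
    [FiniteDimensional K⟮x⁻¹⟯ L] (D : Derivation K L L) (hD : D x = 1) (b : L)
    (hb : ∀ j, IsIntegral (Algebra.adjoin K {x}) (D^[j] b)) : ∃ N, D^[N] b = 0 := by
  have hx0 : x ≠ 0 := by rintro rfl; simp at hD
  obtain ⟨m, hm⟩ := pole_bound x b (hb 0)
  have hV : ∀ V : ValuationSubring L, (∀ c : K, algebraMap K L c ∈ V) → D^[m] b ∈ V := by
    intro V hK
    by_cases hx : x ∈ V
    · have hOV : ∀ y : Algebra.adjoin K {x}, (y : L) ∈ V := by
        rintro ⟨y, hy⟩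
        induction hy using Algebra.adjoin_induction with
        | mem x hx => obtain rfl := hx; assumption
        | algebraMap r => exact hK r
        | add x y _ _ hx hy => exact add_mem hx hy
        | mul x y _ _ hx hy => exact mul_mem hx hy
      obtain ⟨p, hp, hp0⟩ := hb m
      let j : Algebra.adjoin K {x} →+* V :=
        (algebraMap (Algebra.adjoin K {x}) L).codRestrict V.toSubring hOV
      have : IsIntegral V (D^[m] b) := ⟨p.map j, hp.map j, by rw [eval₂_map]; exact hp0⟩
      obtain ⟨z, hz⟩ := IsIntegrallyClosed.isIntegral_iff.mp this
      rw [← hz]; exact z.2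
    · refine descend x hx0 D hD V (fun f hf => ?_) m b (hm V hK hx)
      refine val_log x⁻¹ (x • D) ?_ V hK (by rwa [inv_inv]) f hf
      simp [Derivation.leibniz_inv, hD]
      field_simp
  have hint : IsIntegral K (D^[m] b) := by
    have h1 : D^[m] b ∈ (⨅ V : {V : ValuationSubring L //
        Set.range (algebraMap K L) ⊆ V.toSubring}, V.1.toSubring) := by
      rw [Subring.mem_iInf]
      rintro ⟨V, hVK⟩
      exact hV V fun c => hVK ⟨c, rfl⟩
    rw [iInf_valuationSubring_superset] at h1
    obtain ⟨p, hp, hp0⟩ := h1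
    have h2 : Subring.closure (Set.range (algebraMap K L)) ≤ (algebraMap K L).range :=
      Subring.closure_le.2 fun _ h => h
    let e := (algebraMap K L).rangeRestrict
    have h3 : IsIntegral (algebraMap K L).range (D^[m] b) :=
      ⟨p.map (Subring.inclusion h2), hp.map _, by rw [eval₂_map]; exact hp0⟩
    obtain ⟨q, hq, hq0⟩ := h3
    have hinj : Function.Injective e := (algebraMap K L).rangeRestrict.injective
    let e' := RingEquiv.ofBijective e ⟨hinj, (algebraMap K L).rangeRestrict_surjective⟩
    refine ⟨q.map e'.symm.toRingHom, hq.map _, ?_⟩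
    rw [eval₂_map]
    convert! hq0 using 2
    ext z
    obtain ⟨w, rfl⟩ := e'.surjective z
    simp
    rfl
  refine ⟨m + 1, ?_⟩
  rw [Function.iterate_succ_apply']
  -- a derivation kills elements that are separable algebraic over the constants
  set y := D^[m] b
  have hs := (minpoly.irreducible hint).separable.aeval_derivative_ne_zero (minpoly.aeval K y)
  have h1 := congrArg D (minpoly.aeval K y)
  rw [Derivation.map_aeval, map_zero, smul_eq_mul] at h1
  exact (mul_eq_zero.1 h1).resolve_left hs

/-! ### Étale algebras: derivations and idempotents -/

/-- A derivation extends along a formally étale algebra. -/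
lemma exists_deriv_ext {R S T : Type*} [CommRing R] [CommRing S] [CommRing T] [Algebra R S]
    [Algebra R T] [Algebra S T] [IsScalarTower R S T] [Algebra.FormallyEtale S T]
    (d : Derivation R S S) :
    ∃ D : Derivation R T T, ∀ s, D (algebraMap S T s) = algebraMap S T (d s) := by
  let φ : Ω[S⁄R] →ₗ[S] T := (Algebra.linearMap S T) ∘ₗ d.liftKaehlerDifferential
  let ψ : Ω[T⁄R] →ₗ[T] T := (φ.liftBaseChange T) ∘ₗ
    (KaehlerDifferential.tensorKaehlerEquivOfFormallyEtale R S T).symm.toLinearMap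
  refine ⟨ψ.compDer (KaehlerDifferential.D R T), fun s => ?_⟩
  change φ.liftBaseChange T ((KaehlerDifferential.tensorKaehlerEquivOfFormallyEtale R S T).symm
    (KaehlerDifferential.D R T (algebraMap S T s))) = _
  rw [KaehlerDifferential.tensorKaehlerEquivOfFormallyEtale_symm_D_algebraMap]
  simp [φ]

/-- A derivation on a formally unramified `S`-algebra is determined by its values on `S`. -/
lemma deriv_unique {R S T M : Type*} [CommRing R] [CommRing S] [CommRing T] [Algebra R S]
    [Algebra R T] [Algebra S T] [IsScalarTower R S T] [Algebra.FormallyUnramified S T]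
    [AddCommGroup M] [Module R M] [Module T M] [Module S M] [IsScalarTower S T M]
    (D₁ D₂ : Derivation R T M)
    (h : ∀ s, D₁ (algebraMap S T s) = D₂ (algebraMap S T s)) (y : T) : D₁ y = D₂ y := by
  let f : T →ₗ[S] M :=
    { toFun := fun y => D₁ y - D₂ y
      map_add' := fun a b => by rw [map_add, map_add]; abel
      map_smul' := fun s a => by
        rw [Algebra.smul_def, Derivation.leibniz, Derivation.leibniz, h s, RingHom.id_apply,
          ← algebraMap_smul T s, smul_sub]
        abel }
  let D : Derivation S T M := Derivation.mk' f fun a b => by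
    change D₁ (a * b) - D₂ (a * b) = a • (D₁ b - D₂ b) + b • (D₁ a - D₂ a)
    rw [Derivation.leibniz, Derivation.leibniz, smul_sub, smul_sub]
    abel
  have h1 : D y = D.liftKaehlerDifferential (KaehlerDifferential.D S T y) :=
    (Derivation.liftKaehlerDifferential_comp_D D y).symm
  rw [Subsingleton.elim (KaehlerDifferential.D S T y) 0, map_zero] at h1
  exact sub_eq_zero.1 h1

/-- A connected finite étale algebra over a field is a field. -/
lemma conn_field {F C : Type*} [Field F] [CommRing C] [Algebra F C] [Module.Finite F C]
    [Algebra.Etale F C] [Nontrivial C] (hC : ∀ e : C, IsIdempotentElem e → e = 0 ∨ e = 1) :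
    IsField C := by
  have : IsReduced C := Algebra.FormallyUnramified.isReduced_of_field F C
  have : IsArtinianRing C := IsArtinianRing.of_finite F C
  refine ⟨⟨0, 1, zero_ne_one⟩, mul_comm, fun {a} ha => ?_⟩
  obtain ⟨n, y, hn⟩ := IsArtinian.exists_pow_succ_smul_dvd a (1 : C)
  simp only [smul_eq_mul, mul_one] at hn
  have h1 : ∀ k, a ^ (n + k) * y ^ k = a ^ n := by
    intro k
    induction k with
    | zero => simp
    | succ k ih =>
      rw [Nat.succ_eq_add_one] at hn
      rw [← ih]
      linear_combination a ^ k * y ^ k * hn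
  have h2 : a ^ (n + 1) = a ^ (n + 1) * (a ^ (n + 1) * y ^ (n + 1)) := by
    linear_combination -a * h1 (n + 1)
  rcases hC (a ^ (n + 1) * y ^ (n + 1)) (by
    unfold IsIdempotentElem
    linear_combination -y ^ (n + 1) * h2) with h | h
  · rw [h, mul_zero] at h2
    exact absurd (pow_eq_zero_iff (by omega) |>.1 h2) ha
  · exact ⟨a ^ n * y ^ (n + 1), by rw [← h]; ring⟩

/-- A connected étale algebra over a normal domain remains connected at the generic point. -/
lemma tensor_conn {A B F : Type*} [CommRing A] [IsDomain A] [IsIntegrallyClosed A] [CommRing B]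
    [Algebra A B] [Algebra.Etale A B] [Field F] [Algebra A F] [IsFractionRing A F]
    (hB : ∀ e : B, IsIdempotentElem e → e = 0 ∨ e = 1) (e : F ⊗[A] B) (he : IsIdempotentElem e) :
    e = 0 ∨ e = 1 := by
  have : Module.Flat A B := inferInstance
  have hinj : Function.Injective (Algebra.TensorProduct.includeRight : B →ₐ[A] F ⊗[A] B) :=
    Algebra.TensorProduct.includeRight_injective (IsFractionRing.injective A F)
  let σ := Algebra.TensorProduct.comm A F B
  suffices h : ∃ b : B, Algebra.TensorProduct.includeRight b = e by
    obtain ⟨b, rfl⟩ := h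
    rcases hB b (hinj (by rw [map_mul]; exact he)) with rfl | rfl
    · exact Or.inl (map_zero _)
    · exact Or.inr (map_one _)
  -- an idempotent is integral, and `A` being integrally closed in `F`, `B` is so in `B ⊗ F`
  have hσ : IsIntegral B (σ e) := by
    refine ⟨X ^ 2 - X, monic_X_pow_sub (degree_X_le.trans_lt (by norm_num)), ?_⟩
    have : σ e * σ e = σ e := by rw [← map_mul, he]
    simp [pow_two, this]
  obtain ⟨z, hz⟩ := (TensorProduct.toIntegralClosure_bijective_of_smooth (R := A) (S := B)
    (B := F)).2 ⟨σ e, hσ⟩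
  have hz' : Algebra.TensorProduct.map (AlgHom.id B B) (integralClosure A F).val z = σ e :=
    congrArg Subtype.val hz
  have h2 : ∀ z : B ⊗[A] integralClosure A F, ∃ b : B,
      Algebra.TensorProduct.map (AlgHom.id B B) (integralClosure A F).val z = b ⊗ₜ 1 := by
    intro z
    induction z using TensorProduct.induction_on with
    | zero => exact ⟨0, by simp⟩
    | tmul b f =>
      obtain ⟨a, ha⟩ := IsIntegrallyClosed.isIntegral_iff.mp f.2
      refine ⟨a • b, ?_⟩
      simp [← ha, Algebra.algebraMap_eq_smul_one, TensorProduct.smul_tmul]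
    | add x y hx hy =>
      obtain ⟨b, hb⟩ := hx
      obtain ⟨c, hc⟩ := hy
      exact ⟨b + c, by rw [map_add, hb, hc, TensorProduct.add_tmul]⟩
  obtain ⟨b, hb⟩ := h2 z
  refine ⟨b, σ.injective ?_⟩
  rw [← hz', hb]
  simp [σ]

open IntermediateField in
/-- The extension `D` of `d/dX` to a finite unramified `R[X]`-algebra `B` is locally nilpotent,
provided that `B` embeds in a field `L` finite and étale over the fraction field of `R[X]`. -/
lemma nilp_aux {R B F L : Type*} [CommRing R] [IsDomain R] [CharZero R] [CommRing B]
    [Algebra R[X] B] [Algebra R B] [IsScalarTower R R[X] B] [Module.Finite R[X] B]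
    [Algebra.FormallyUnramified R[X] B] [Field F] [Algebra R[X] F] [IsFractionRing R[X] F]
    [Field L] [Algebra F L] [Algebra R[X] L] [IsScalarTower R[X] F L] [Module.Finite F L]
    [Algebra.FormallyEtale F L] [Algebra B L] [IsScalarTower R[X] B L] [FaithfulSMul B L]
    [Algebra R L] [IsScalarTower R R[X] L]
    (D : Derivation R B B)
    (hD : ∀ p : R[X], D (algebraMap R[X] B p) = algebraMap R[X] B (derivative p)) (b : B) :
    ∃ N, D^[N] b = 0 := by
  have hAF : Function.Injective (algebraMap R[X] F) := IsFractionRing.injective R[X] F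
  have hAL : Function.Injective (algebraMap R[X] L) := by
    rw [IsScalarTower.algebraMap_eq R[X] F L]
    exact (algebraMap F L).injective.comp hAF
  have hRL : Function.Injective (algebraMap R L) := by
    rw [IsScalarTower.algebraMap_eq R R[X] L]
    exact hAL.comp C_injective
  have : FaithfulSMul R L := (faithfulSMul_iff_algebraMap_injective R L).2 hRL
  let K := FractionRing R
  let _ : Algebra K L := FractionRing.liftAlgebra R L
  have : IsScalarTower R K L := FractionRing.isScalarTower_liftAlgebra R L
  have : CharZero K := charZero_of_injective_algebraMap (IsFractionRing.injective R K)
  set x : L := algebraMap R[X] L X with hx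
  have : Algebra.FormallyEtale R[X] F := .of_isLocalization (nonZeroDivisors R[X])
  have : Algebra.FormallyEtale R[X] L := .comp R[X] F L
  obtain ⟨D₁, hD₁⟩ := exists_deriv_ext (R := R) (S := R[X]) (T := L) derivative'
  let D₂ : Derivation K L L := Derivation.mk'
    (D₁.toLinearMap.extendScalarsOfIsLocalization (nonZeroDivisors R) K)
    (fun a b => D₁.leibniz a b)
  have hD₂ : ∀ y, D₂ y = D₁ y := fun y => rfl
  have hDx : D₂ x = 1 := by
    rw [hD₂, hx, hD₁]; simp
  -- both composites extend the derivative of polynomials, hence agree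
  have hcomp : ∀ y : B, algebraMap B L (D y) = D₂ (algebraMap B L y) := by
    have : IsScalarTower R B L := .of_algebraMap_eq fun r => by
      rw [IsScalarTower.algebraMap_apply R R[X] B, ← IsScalarTower.algebraMap_apply R[X] B L,
        ← IsScalarTower.algebraMap_apply R R[X] L]
    refine deriv_unique (S := R[X]) (((Algebra.linearMap B L).compDer D)) (D₁.compAlgebraMap B) ?_
    intro p
    change algebraMap B L (D (algebraMap R[X] B p)) = D₁ (algebraMap B L (algebraMap R[X] B p))
    rw [hD, ← IsScalarTower.algebraMap_apply, ← IsScalarTower.algebraMap_apply, hD₁]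
    rfl
  have hiter : ∀ (n : ℕ) (y : B), algebraMap B L (D^[n] y) = D₂^[n] (algebraMap B L y) := by
    intro n
    induction n with
    | zero => intro y; rfl
    | succ n ih => intro y; rw [Function.iterate_succ_apply, ih, hcomp, Function.iterate_succ_apply]
  have hpoly : ∀ p : R[X], algebraMap R[X] L p ∈ Algebra.adjoin K {x} := by
    intro p
    induction p using Polynomial.induction_on' with
    | add p q hp hq => rw [map_add]; exact add_mem hp hq
    | monomial n r =>
      rw [← C_mul_X_pow_eq_monomial, map_mul, map_pow]
      refine mul_mem ?_ (pow_mem (Algebra.self_mem_adjoin_singleton K x) _)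
      have : algebraMap R[X] L (C r) = algebraMap K L (algebraMap R K r) := by
        rw [← IsScalarTower.algebraMap_apply, IsScalarTower.algebraMap_apply R R[X] L]; rfl
      rw [this]
      exact Subalgebra.algebraMap_mem _ _
  have hFK : ∀ f : F, algebraMap F L f ∈ K⟮x⁻¹⟯ := by
    have h1 : ∀ p : R[X], algebraMap R[X] L p ∈ K⟮x⁻¹⟯ := by
      intro p
      have h2 : x ∈ K⟮x⁻¹⟯ := by
        have := inv_mem (mem_adjoin_simple_self K x⁻¹)
        rwa [inv_inv] at this
      have h3 : Algebra.adjoin K {x} ≤ K⟮x⁻¹⟯.toSubalgebra :=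
        Algebra.adjoin_le (by simpa using h2)
      exact h3 (hpoly p)
    intro f
    obtain ⟨p, q, _, rfl⟩ := IsFractionRing.div_surjective (A := R[X]) f
    rw [map_div₀, ← IsScalarTower.algebraMap_apply, ← IsScalarTower.algebraMap_apply]
    exact div_mem (h1 p) (h1 q)
  have : FiniteDimensional K⟮x⁻¹⟯ L := by
    let _ : Algebra F K⟮x⁻¹⟯ := ((algebraMap F L).codRestrict K⟮x⁻¹⟯ hFK).toAlgebra
    have : IsScalarTower F K⟮x⁻¹⟯ L := .of_algebraMap_eq fun _ => rfl
    exact Module.Finite.of_restrictScalars_finite F K⟮x⁻¹⟯ L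
  obtain ⟨N, hN⟩ := key_nilp x D₂ hDx (algebraMap B L b) (fun j => by
    rw [← hiter]
    obtain ⟨p, hp, hp0⟩ := Algebra.IsIntegral.isIntegral (R := R[X]) (D^[j] b)
    let φ : R[X] →+* Algebra.adjoin K {x} :=
      (algebraMap R[X] L).codRestrict (Algebra.adjoin K {x}) hpoly
    refine ⟨p.map φ, hp.map _, ?_⟩
    rw [eval₂_map]
    have h2 := congrArg (algebraMap B L) hp0
    rw [map_zero, hom_eval₂, ← IsScalarTower.algebraMap_eq] at h2
    exact h2)
  refine ⟨N, FaithfulSMul.algebraMap_injective B L ?_⟩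
  rw [hiter, hN, map_zero]

/-- The extension `D` of `d/dX` to a connected finite étale `R[X]`-algebra is locally nilpotent. -/
lemma nilp {R B : Type*} [CommRing R] [IsDomain R] [UniqueFactorizationMonoid R] [CharZero R]
    [CommRing B] [Nontrivial B]
    [Algebra R[X] B] [Algebra R B] [IsScalarTower R R[X] B] [Module.Finite R[X] B]
    [Algebra.Etale R[X] B] (hB : ∀ e : B, IsIdempotentElem e → e = 0 ∨ e = 1)
    (D : Derivation R B B)
    (hD : ∀ p : R[X], D (algebraMap R[X] B p) = algebraMap R[X] B (derivative p)) (b : B) :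
    ∃ N, D^[N] b = 0 := by
  let F := FractionRing R[X]
  let L := F ⊗[R[X]] B
  have hinj : Function.Injective (Algebra.TensorProduct.includeRight : B →ₐ[R[X]] L) :=
    Algebra.TensorProduct.includeRight_injective (IsFractionRing.injective R[X] F)
  have : Nontrivial L := hinj.nontrivial
  have hL : IsField L := conn_field (F := F) (C := L) (tensor_conn hB)
  let _ : Field L := hL.toField
  let _ : Algebra B L := Algebra.TensorProduct.rightAlgebra
  have : FaithfulSMul B L := (faithfulSMul_iff_algebraMap_injective B L).2 hinj
  exact nilp_aux (F := F) (L := L) D hD b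

/-! ### Locally nilpotent derivations with a slice -/

/-- If `D x = 1`, an element on which `D` is nilpotent is congruent modulo `x` to one killed by `D`,
namely its Taylor expansion `∑ (-x) ^ i / i! * D^[i] b`. -/
lemma taylor {B : Type*} [CommRing B] [Algebra ℚ B] {R : Type*} [CommRing R] [Algebra R B]
    (D : Derivation R B B) (x : B) (hx : D x = 1) (b : B) (N : ℕ) (hN : D^[N] b = 0) :
    ∃ c, D (b + x * c) = 0 := by
  rcases Nat.eq_zero_or_pos N with rfl | hpos
  · exact ⟨0, by simp [show b = 0 from hN]⟩
  have h : ∀ n : ℕ, ∃ c, D (b + x * c) = ((n.factorial : ℚ)⁻¹) • ((-x) ^ n * D^[n + 1] b) := by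
    intro n
    induction n with
    | zero => exact ⟨0, by simp⟩
    | succ n ih =>
      obtain ⟨c, hc⟩ := ih
      refine ⟨c - (((n + 1).factorial : ℚ)⁻¹) • ((-x) ^ n * D^[n + 1] b), ?_⟩
      have h1 : b + x * (c - (((n + 1).factorial : ℚ)⁻¹) • ((-x) ^ n * D^[n + 1] b)) =
          (b + x * c) + (((n + 1).factorial : ℚ)⁻¹) • ((-x) ^ (n + 1) * D^[n + 1] b) := by
        rw [mul_sub, mul_smul_comm, pow_succ, sub_eq_add_neg, ← smul_neg, add_assoc]
        congr 3
        ring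
      have h2 : D ((((n + 1).factorial : ℚ)⁻¹) • ((-x) ^ (n + 1) * D^[n + 1] b)) =
          (((n + 1).factorial : ℚ)⁻¹) • D ((-x) ^ (n + 1) * D^[n + 1] b) :=
        map_rat_smul D _ _
      have h3 : ((n.factorial : ℚ)⁻¹) = ((n + 1).factorial : ℚ)⁻¹ * (n + 1 : ℕ) := by
        rw [Nat.factorial_succ]
        push_cast
        field_simp
      rw [h1, map_add, hc, h2, h3, mul_smul, ← smul_add, Derivation.leibniz, Derivation.leibniz_pow,
        map_neg, hx, Function.iterate_succ_apply' D (n + 1), Nat.cast_smul_eq_nsmul]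
      congr 1
      simp only [Nat.add_sub_cancel, smul_eq_mul, nsmul_eq_mul]
      ring
  obtain ⟨n, rfl⟩ := Nat.exists_eq_succ_of_ne_zero hpos.ne'
  obtain ⟨c, hc⟩ := h n
  exact ⟨c, by rw [hc, hN, mul_zero, smul_zero]⟩

/-- If `D x = 1` and `D` is nilpotent on `z`, then `D` kills `x * z` only for `z = 0`. By the
Leibniz rule `(n + 1) * D^[n] z = -x * D^[n + 1] z` for all `n`. -/
lemma ker_inter {B : Type*} [CommRing B] [Algebra ℚ B] {R : Type*} [CommRing R] [Algebra R B]
    (D : Derivation R B B) (x : B) (hx : D x = 1) (z : B) (N : ℕ) (hN : D^[N] z = 0)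
    (h : D (x * z) = 0) : z = 0 := by
  have h1 : ∀ n : ℕ, (n + 1) * D^[n] z + x * D^[n + 1] z = 0 := by
    intro n
    induction n with
    | zero =>
      rw [Derivation.leibniz, hx] at h
      simp only [smul_eq_mul] at h
      simp only [Nat.cast_zero, Function.iterate_zero, id, Function.iterate_one, zero_add]
      linear_combination h
    | succ n ih =>
      have h2 := congrArg D ih
      rw [map_add, Derivation.leibniz, Derivation.leibniz, hx, map_zero, map_add,
        Derivation.map_natCast, Derivation.map_one_eq_zero, ← Function.iterate_succ_apply' D,
        ← Function.iterate_succ_apply' D] at h2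
      simp only [smul_eq_mul] at h2
      push_cast
      linear_combination h2
  induction N with
  | zero => exact hN
  | succ n ih =>
    apply ih
    have h2 := h1 n
    rw [hN, mul_zero, add_zero] at h2
    have h3 : ((n + 1 : ℕ) : ℚ) • D^[n] z = 0 := by
      rw [Nat.cast_smul_eq_nsmul, nsmul_eq_mul]
      exact_mod_cast h2
    exact (smul_eq_zero.1 h3).resolve_left (by positivity)

lemma exists_primitive {R : Type*} [CommRing R] [Algebra ℚ R] (p : R[X]) :
    ∃ q : R[X], derivative q = p := by
  induction p using Polynomial.induction_on' with
  | add p q hp hq =>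
    obtain ⟨p', rfl⟩ := hp
    obtain ⟨q', rfl⟩ := hq
    exact ⟨p' + q', map_add _ _ _⟩
  | monomial n r =>
    refine ⟨monomial (n + 1) (((n + 1 : ℕ) : ℚ)⁻¹ • r), ?_⟩
    rw [derivative_monomial, Nat.add_sub_cancel]
    congr 1
    rw [smul_mul_assoc, mul_comm, ← nsmul_eq_mul, ← Nat.cast_smul_eq_nsmul ℚ, smul_smul,
      inv_mul_cancel₀ (by positivity), one_smul]

/-! ### Simple connectedness of polynomial rings -/

/-- The ring-theoretic form of simple connectedness: every finite étale algebra that is connected,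
that is, nonzero without idempotents other than `0` and `1`, is trivial. Only algebras in `Type`
are considered, which is the universe of the schemes at hand. -/
def EtaleSC (R : Type) [CommRing R] : Prop :=
  ∀ (C : Type) [CommRing C] [Algebra R C] [Module.Finite R C] [Algebra.Etale R C],
    Nontrivial C → (∀ e : C, IsIdempotentElem e → e = 0 ∨ e = 1) →
    Function.Bijective (algebraMap R C)

theorem etaleSC_of_isAlgClosed (k : Type) [Field k] [IsAlgClosed k] : EtaleSC k := by
  intro C _ _ _ _ _ hC
  have : IsDomain C := (conn_field (F := k) hC).isDomain
  exact IsAlgClosed.algebraMap_bijective_of_isIntegral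

theorem EtaleSC.of_ringEquiv {R S : Type} [CommRing R] [CommRing S] (e : R ≃+* S)
    (h : EtaleSC R) : EtaleSC S := by
  intro C _ _ _ _ hn hC
  let _ : Algebra R S := e.toRingHom.toAlgebra
  let _ : Algebra R C := Algebra.compHom C e.toRingHom
  have : IsScalarTower R S C := .of_algebraMap_eq fun _ => rfl
  let e' : R ≃ₐ[R] S := AlgEquiv.ofRingEquiv (f := e) fun _ => rfl
  have : Algebra.Etale R S := .of_equiv e'
  have : Module.Finite R S := .equiv e'.toLinearEquiv
  have : Algebra.Etale R C := .comp R S C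
  have : Module.Finite R C := .trans S C
  have h1 : Function.Bijective (algebraMap S C ∘ e) := h C hn hC
  exact (Function.Bijective.of_comp_iff _ e.bijective).1 h1

/-- The inductive step. The derivation `d/dX` extends to a locally nilpotent derivation `D` on `B`. The
fibre `Q` of `B` at `X = 0` is connected since its idempotents lift to `B`, so `Q = R`; hence the
kernel of `D` is `R`, and integrating shows that `B = R[X]`. -/
theorem EtaleSC.polynomial {R : Type} [CommRing R] [IsDomain R] [UniqueFactorizationMonoid R]
    [Algebra ℚ R] (h : EtaleSC R) : EtaleSC R[X] := by
  intro B _ _ _ _ _ hB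
  have : CharZero R := algebraRat.charZero R
  let _ : Algebra R B := Algebra.compHom B (C : R →+* R[X])
  have : IsScalarTower R R[X] B := .of_algebraMap_eq fun _ => rfl
  let _ : Algebra ℚ B := ((algebraMap R B).comp (algebraMap ℚ R)).toAlgebra
  obtain ⟨D, hD⟩ := exists_deriv_ext (R := R) (S := R[X]) (T := B) derivative'
  have hnil := nilp hB D hD
  set x : B := algebraMap R[X] B X with hx
  have hDx : D x = 1 := by rw [hx, hD]; simp
  have hker0 : ∀ z, D (x * z) = 0 → x * z = 0 := fun z hz => by
    obtain ⟨N, hN⟩ := hnil z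
    rw [ker_inter D x hDx z N hN hz, mul_zero]
  let _ : Algebra R[X] R := (evalRingHom (0 : R)).toAlgebra
  -- the fibre `Q = B / x B` over `X = 0`, an étale `R`-algebra
  let Q := R ⊗[R[X]] B
  let π : B →ₐ[R[X]] Q := Algebra.TensorProduct.includeRight
  have hπr : ∀ r : R, π (algebraMap R B r) = algebraMap R Q r := by
    intro r
    change (1 : R) ⊗ₜ[R[X]] (algebraMap R B r) = r ⊗ₜ[R[X]] (1 : B)
    have h1 : algebraMap R B r = (C r : R[X]) • (1 : B) := by
      rw [Algebra.smul_def, mul_one]; rfl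
    have h2 : (C r : R[X]) • (1 : R) = r := by
      rw [Algebra.smul_def, mul_one]; exact eval_C
    rw [h1, ← TensorProduct.smul_tmul, h2]
  have hπx : π x = 0 := by
    rw [hx, AlgHom.commutes, IsScalarTower.algebraMap_apply R[X] R Q]
    have : algebraMap R[X] R X = 0 := eval_X
    rw [this, map_zero]
  have hπs : ∀ y : Q, ∃ b, π b = y := by
    intro y
    induction y using TensorProduct.induction_on with
    | zero => exact ⟨0, map_zero _⟩
    | tmul r b =>
      refine ⟨algebraMap R B r * b, ?_⟩
      rw [map_mul, hπr]
      change (r ⊗ₜ[R[X]] (1 : B)) * ((1 : R) ⊗ₜ[R[X]] b) = _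
      simp
    | add y z hy hz =>
      obtain ⟨b, rfl⟩ := hy
      obtain ⟨c, rfl⟩ := hz
      exact ⟨b + c, map_add _ _ _⟩
  have hπk : ∀ b, π b = 0 → ∃ c, b = x * c := by
    intro b hb
    let f : R[X] →ₐ[R[X]] R := Algebra.ofId _ _
    have hf : Function.Surjective f := fun r => ⟨C r, eval_C⟩
    have h1 : (1 : R[X]) ⊗ₜ[R[X]] b ∈ RingHom.ker (Algebra.TensorProduct.map f (AlgHom.id R[X] B)) := by
      rw [RingHom.mem_ker, Algebra.TensorProduct.map_tmul, map_one]
      exact hb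
    rw [Algebra.TensorProduct.rTensor_ker f hf] at h1
    have h2 : Ideal.map (Algebra.TensorProduct.includeLeft : R[X] →ₐ[R[X]] R[X] ⊗[R[X]] B)
        (RingHom.ker f) ≤ (Ideal.span {x}).comap (Algebra.TensorProduct.lid R[X] B) := by
      refine Ideal.map_le_iff_le_comap.2 fun p hp => ?_
      obtain ⟨q, rfl⟩ : X ∣ p := X_dvd_iff.2 (by rw [coeff_zero_eq_eval_zero]; exact hp)
      rw [Ideal.mem_comap, Ideal.mem_comap, Ideal.mem_span_singleton]
      refine ⟨algebraMap R[X] B q, ?_⟩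
      change (X * q) • (1 : B) = _
      rw [Algebra.smul_def, mul_one, map_mul]
    have h3 := h2 h1
    rw [Ideal.mem_comap, Ideal.mem_span_singleton] at h3
    have h4 : x ∣ b := by simpa using h3
    exact h4
  have hQ : Nontrivial Q := by
    by_contra hQ
    have := not_nontrivial_iff_subsingleton.1 hQ
    obtain ⟨c, hc⟩ := hπk 1 (Subsingleton.elim _ _)
    have := hker0 c (by rw [← hc, Derivation.map_one_eq_zero])
    rw [← hc] at this
    exact one_ne_zero this
  have hQe : ∀ e : Q, IsIdempotentElem e → e = 0 ∨ e = 1 := by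
    intro e he
    obtain ⟨b, rfl⟩ := hπs e
    obtain ⟨N, hN⟩ := hnil b
    -- replace the lift `b` of `e` by one killed by `D`
    obtain ⟨c, hc⟩ := taylor D x hDx b N hN
    have h1 : π (b + x * c) = π b := by rw [map_add, map_mul, hπx, zero_mul, add_zero]
    rw [← h1] at he ⊢
    generalize b + x * c = b' at *
    obtain ⟨z, hz⟩ := hπk (b' * b' - b') (by rw [map_sub, map_mul, he, sub_self])
    have h2 := hker0 z (by rw [← hz, map_sub, Derivation.leibniz, hc]; simp)
    rw [← hz, sub_eq_zero] at h2
    rcases hB b' h2 with rfl | rfl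
    · exact Or.inl (map_zero _)
    · exact Or.inr (map_one _)
  have hbij := h Q hQ hQe
  have hconst : ∀ y, D y = 0 → ∃ r : R, algebraMap R B r = y := by
    intro y hy
    obtain ⟨r, hr⟩ := hbij.2 (π y)
    refine ⟨r, ?_⟩
    obtain ⟨z, hz⟩ := hπk (algebraMap R B r - y) (by rw [map_sub, hπr, hr, sub_self])
    have h2 := hker0 z (by rw [← hz, map_sub, hy, Derivation.map_algebraMap, sub_zero])
    rwa [← hz, sub_eq_zero] at h2
  constructor
  -- the kernel of `R[X] → B` is stable under differentiation, so it contains a constant if not zero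
  · rw [injective_iff_map_eq_zero]
    have key : ∀ n : ℕ, ∀ p : R[X], p.natDegree < n → algebraMap R[X] B p = 0 → p = 0 := by
      intro n
      induction n with
      | zero => intro p hp; omega
      | succ n ih =>
        intro p hp hp0
        have h1 : p.natDegree = 0 := by
          by_contra h0
          have h2 := ih (derivative p) (by have := natDegree_derivative_lt h0; omega) (by
            have := hD p
            rw [hp0, map_zero] at this
            exact this.symm)
          exact h0 (derivative_eq_zero.1 h2)
        obtain ⟨r, rfl⟩ := natDegree_eq_zero.1 h1
        have h2 : algebraMap R Q r = 0 := by
          rw [← hπr]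
          change π (algebraMap R[X] B (C r)) = 0
          rw [hp0, map_zero]
        rw [hbij.1 (h2.trans (map_zero _).symm), map_zero]
    exact fun p => key _ p (Nat.lt_succ_self _)
  -- integrate `D b`, which is a polynomial by induction on the order of nilpotency
  · have key : ∀ N : ℕ, ∀ b, D^[N] b = 0 → ∃ p, algebraMap R[X] B p = b := by
      intro N
      induction N with
      | zero => exact fun b hb => ⟨0, by rw [map_zero]; exact hb.symm⟩
      | succ N ih =>
        intro b hb
        obtain ⟨p, hp⟩ := ih (D b) hb
        obtain ⟨q, rfl⟩ := exists_primitive p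
        obtain ⟨r, hr⟩ := hconst (b - algebraMap R[X] B q) (by
          rw [map_sub, hD, ← hp]; exact sub_self _)
        refine ⟨q + C r, ?_⟩
        rw [map_add]
        change _ + algebraMap R B r = b
        rw [hr]; ring
    intro b
    obtain ⟨N, hN⟩ := hnil b
    exact key N b hN

theorem etaleSC_mvPolynomial (k : Type) [Field k] [IsAlgClosed k] [CharZero k] (n : ℕ) :
    EtaleSC (MvPolynomial (Fin n) k) := by
  induction n with
  | zero => exact (etaleSC_of_isAlgClosed k).of_ringEquiv (MvPolynomial.isEmptyRingEquiv k (Fin 0)).symm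
  | succ n ih => exact ih.polynomial.of_ringEquiv (MvPolynomial.finSuccEquiv k n).symm.toRingEquiv

/-! ### From algebras to schemes -/

lemma idempotent_trivial {B : Type*} [CommRing B] [ConnectedSpace (PrimeSpectrum B)] (e : B)
    (he : IsIdempotentElem e) : e = 0 ∨ e = 1 := by
  have h : IsClopen (PrimeSpectrum.basicOpen e : Set (PrimeSpectrum B)) :=
    PrimeSpectrum.isClopen_iff.2 ⟨e, he, rfl⟩
  rcases isClopen_iff.1 h with h0 | h1
  · refine Or.inl (PrimeSpectrum.basicOpen_injOn_isIdempotentElem he IsIdempotentElem.zero ?_)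
    rw [PrimeSpectrum.basicOpen_zero]
    exact SetLike.ext' h0
  · refine Or.inr (PrimeSpectrum.basicOpen_injOn_isIdempotentElem he IsIdempotentElem.one ?_)
    rw [PrimeSpectrum.basicOpen_one]
    exact SetLike.ext' h1

lemma EtaleSC.simplyConnected {R : Type} [CommRing R] (hR : EtaleSC R) :
    (Spec (CommRingCat.of R)).SimplyConnected := by
  intro T h hfin het hconn
  have : IsAffine T := isAffine_of_isAffineHom h
  obtain ⟨φ, hφ⟩ := Spec.map_surjective (T.isoSpec.inv ≫ h)
  have h1 : IsFinite (Spec.map φ) := by rw [hφ]; infer_instance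
  have h2 : Etale (Spec.map φ) := by
    rw [hφ]
    have : Etale h := het
    infer_instance
  rw [IsFinite.SpecMap_iff] at h1
  rw [HasRingHomProperty.Spec_iff (P := @Etale)] at h2
  let B := Γ(T, ⊤)
  let _ : Algebra R B := φ.hom.toAlgebra
  have : Module.Finite R B := h1
  have : Algebra.Etale R B := h2
  have hB : ConnectedSpace (PrimeSpectrum B) :=
    (Scheme.homeoOfIso T.isoSpec).surjective.connectedSpace (Scheme.homeoOfIso T.isoSpec).continuous
  have hn : Nontrivial B := PrimeSpectrum.nonempty_iff_nontrivial.1 hB.toNonempty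
  have hbij : Function.Bijective φ.hom := hR B hn idempotent_trivial
  have : IsIso φ := (ConcreteCategory.isIso_iff_bijective φ).2 hbij
  have : IsIso (T.isoSpec.inv ≫ h) := by rw [← hφ]; infer_instance
  exact IsIso.of_isIso_comp_left T.isoSpec.inv h

end

end EtaleAffine

/-- Affine space over an algebraically closed field of characteristic zero is
simply connected. -/
theorem affineSpace_simplyConnected (k : Type) [Field k] [IsAlgClosed k] [CharZero k] (n : ℕ) :
    (Spec (CommRingCat.of (MvPolynomial (Fin n) k))).SimplyConnected := by
  exact (EtaleAffine.etaleSC_mvPolynomial k n).simplyConnected
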